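/- arXiv:1902.07325 — 3 statements merged into one kernel-verified Lean document; each statement's English description precedes it below -/
import Mathlib

section
/- Let u and v be elements of the Tits algebra ℝΣ[𝒜] of a hyperplane arrangement 𝒜 in ℝ^n. If u is characteristic of parameter s and v is characteristic of parameter t, then the product uv is characteristic of parameter st. -/
open Finset MeasureTheory

noncomputable section

namespace CharElts

/-- Ambient Euclidean space `ℝ^n`. -/
abbrev V (n : ℕ) := EuclideanSpace ℝ (Fin n)

/-- An affine functional on `ℝ^n`; a hyperplane is its zero set. -/
abbrev AffForm (n : ℕ) := V n →ᵃ[ℝ] ℝ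

/-- The hyperplane determined by an affine functional. -/
def hypSet {n : ℕ} (ℓ : AffForm n) : Set (V n) := {x | ℓ x = 0}

variable {n : ℕ} (𝒜 : Finset (AffForm n))

/-- Index type for the hyperplanes of the arrangement. -/
abbrev Idx := {ℓ : AffForm n // ℓ ∈ 𝒜}

/-- The (possibly empty) set cut out by a sign vector `σ`. -/
def faceSet (σ : Idx 𝒜 → SignType) : Set (V n) :=
  {x | ∀ ℓ : Idx 𝒜, SignType.sign (ℓ.1 x) = σ ℓ}

/-- A face of the arrangement: a sign vector whose face set is nonempty. -/
@[ext] structure Face where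
  sgn : Idx 𝒜 → SignType
  nonempty : (faceSet 𝒜 sgn).Nonempty

open Classical in
instance : Fintype (Face 𝒜) :=
  Fintype.ofInjective Face.sgn (fun F G h => by cases F; cases G; simpa using h)

/-- The underlying point set of a face. -/
def Face.carrier (F : Face 𝒜) : Set (V n) := faceSet 𝒜 F.sgn

/-- A flat: a nonempty intersection of some subcollection of the hyperplanes
(the empty intersection gives all of `ℝ^n`). -/
def IsFlat (X : Set (V n)) : Prop :=
  X.Nonempty ∧ ∃ P : Idx 𝒜 → Prop, X = ⋂ ℓ ∈ {ℓ : Idx 𝒜 | P ℓ}, hypSet ℓ.1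

/-- The poset of flats, ordered by inclusion. -/
def Flat := {X : Set (V n) // IsFlat 𝒜 X}

instance : PartialOrder (Flat 𝒜) :=
  inferInstanceAs (PartialOrder {X : Set (V n) // IsFlat 𝒜 X})

lemma flat_eq_inter (X : Flat 𝒜) :
    X.1 = ⋂ ℓ ∈ {ℓ : Idx 𝒜 | X.1 ⊆ hypSet ℓ.1}, hypSet ℓ.1 := by
  obtain ⟨Z, hne, P, rfl⟩ := X
  apply subset_antisymm
  · intro x hx
    simp only [Set.mem_iInter, Set.mem_setOf_eq]
    intro ℓ hℓ
    exact hℓ hx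
  · intro x hx
    simp only [Set.mem_iInter, Set.mem_setOf_eq] at hx ⊢
    intro ℓ hℓ
    refine hx ℓ ?_
    intro y hy
    simp only [Set.mem_iInter, Set.mem_setOf_eq] at hy
    exact hy ℓ hℓ

open Classical in
instance : Fintype (Flat 𝒜) :=
  Fintype.ofInjective (fun X : Flat 𝒜 => {ℓ : Idx 𝒜 | X.1 ⊆ hypSet ℓ.1}) <| by
    intro X Y h
    dsimp only at h
    apply Subtype.ext
    rw [flat_eq_inter 𝒜 X, flat_eq_inter 𝒜 Y, h]

/-- The top flat: the whole ambient space. -/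
def topFlat : Flat 𝒜 :=
  ⟨Set.univ, ⟨⟨0, trivial⟩, fun _ => False, by simp⟩⟩

/-- The support of a face: the intersection of the hyperplanes on which it lies. -/
def supp (F : Face 𝒜) : Flat 𝒜 :=
  ⟨⋂ ℓ ∈ {ℓ : Idx 𝒜 | F.sgn ℓ = 0}, hypSet ℓ.1, by
    constructor
    · obtain ⟨x, hx⟩ := F.nonempty
      refine ⟨x, ?_⟩
      simp only [Set.mem_iInter, Set.mem_setOf_eq]
      intro ℓ hℓ
      have h0 := hx ℓ
      rw [hℓ] at h0
      simpa [hypSet, sign_eq_zero_iff] using h0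
    · exact ⟨fun ℓ => F.sgn ℓ = 0, rfl⟩⟩

/-- The dimension of (the affine hull of) a subset of `ℝ^n`. -/
def dimS (X : Set (V n)) : ℕ := Module.finrank ℝ (vectorSpan ℝ X)

open Classical in
/-- An element `w = Σ_F w^F H_F` of the Tits algebra (recorded by its coefficient
vector) is *characteristic of parameter `t`* if for every flat `X`, the sum of the
coefficients of the faces with support contained in `X` equals `t ^ rk X`,
where `rk X = dim X - d` and `d` is the common dimension of the minimal flats. -/
def IsCharacteristic (d : ℕ) (w : Face 𝒜 → ℝ) (t : ℝ) : Prop :=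
  ∀ X : Flat 𝒜,
    (∑ F : Face 𝒜, if (supp 𝒜 F).1 ⊆ X.1 then w F else 0) = t ^ (dimS X.1 - d)

/-- The sign vector of the Tits product `FG` of two faces. -/
def combineSgn {I : Type*} (σ τ : I → SignType) : I → SignType :=
  fun ℓ => if σ ℓ = 0 then τ ℓ else σ ℓ

open Classical in
/-- The product of the Tits algebra, on coefficient vectors:
`(u·v)^C = Σ_{F,G : FG = C} u^F v^G`, extending `H_F · H_G = H_{FG}` bilinearly. -/
def mulT (u v : Face 𝒜 → ℝ) : Face 𝒜 → ℝ :=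
  fun C => ∑ F : Face 𝒜, ∑ G : Face 𝒜,
    if combineSgn F.sgn G.sgn = C.sgn then u F * v G else 0

open Classical in
/-- The basis element `H_F` of the Tits algebra, as a coefficient vector. -/
def unitV (F : Face 𝒜) : Face 𝒜 → ℝ := fun G => if G = F then 1 else 0

/-- A chamber: a face whose sign vector is nowhere zero. -/
def IsChamber (F : Face 𝒜) : Prop := ∀ ℓ : Idx 𝒜, F.sgn ℓ ≠ 0

open Classical in
/-- `IsMoebius 𝒜 μ` states that `μ` is the Möbius function of the poset of
flats of `𝒜` (these conditions determine `μ` uniquely). -/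
def IsMoebius (μ : Flat 𝒜 → Flat 𝒜 → ℝ) : Prop :=
  (∀ X, μ X X = 1) ∧
  (∀ X Y : Flat 𝒜, X < Y →
    (∑ Z : Flat 𝒜, if X ≤ Z ∧ Z ≤ Y then μ X Z else 0) = 0) ∧
  (∀ X Y : Flat 𝒜, ¬ X ≤ Y → μ X Y = 0)

open Classical in
/-- `χ(𝒜^X, t) = Σ_{Y ≤ X} μ(Y, X) t^{rk Y}`: the characteristic polynomial of the
arrangement under the flat `X`.  Taking `X = ⊤` gives the characteristic
polynomial of `𝒜` itself. -/
def charPolyUnder (μ : Flat 𝒜 → Flat 𝒜 → ℝ) (d : ℕ) (X : Flat 𝒜) (t : ℝ) : ℝ :=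
  ∑ Y : Flat 𝒜, if Y ≤ X then μ Y X * t ^ (dimS Y.1 - d) else 0

/-- The space of directions `L = ⋂_{H ∈ 𝒜} dir(H)`: the intersection of the kernels of
the linear parts of the defining functionals. -/
def dirL : Submodule ℝ (V n) := ⨅ ℓ : Idx 𝒜, LinearMap.ker ℓ.1.linear

/-- A face is essentially bounded if its image in `ℝ^n / L` is bounded. -/
def EssBounded (F : Face 𝒜) : Prop :=
  Bornology.IsBounded ((dirL 𝒜).mkQ '' F.carrier)

/-- A hyperplane (zero set of a nonconstant affine functional) is nonempty. -/
lemma hyp_nonempty (ℓ : AffForm n) (h : ℓ.linear ≠ 0) : (hypSet ℓ).Nonempty := by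
  obtain ⟨v, hv⟩ : ∃ v, ℓ.linear v ≠ 0 := by
    by_contra hc
    push_neg at hc
    exact h (LinearMap.ext fun v => hc v)
  refine ⟨((-ℓ 0) / (ℓ.linear v)) • v, ?_⟩
  have hdecomp : ℓ (((-ℓ 0) / (ℓ.linear v)) • v)
      = ℓ.linear (((-ℓ 0) / (ℓ.linear v)) • v) + ℓ 0 := by
    conv_lhs => rw [show ((-ℓ 0) / (ℓ.linear v)) • v = ((-ℓ 0) / (ℓ.linear v)) • v +ᵥ (0 : V n)
      from (add_zero _).symm]
    rw [AffineMap.map_vadd]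
    rfl
  show ℓ _ = 0
  rw [hdecomp, LinearMap.map_smul, smul_eq_mul, div_mul_cancel₀ _ hv, neg_add_cancel]

lemma supp_subset_iff (F : Face 𝒜) (P : Idx 𝒜 → Prop) :
    (supp 𝒜 F).1 ⊆ (⋂ ℓ ∈ {ℓ : Idx 𝒜 | P ℓ}, hypSet ℓ.1) ↔ ∀ ℓ, P ℓ → F.sgn ℓ = 0 := by
  constructor
  · intro h ℓ hP
    obtain ⟨x, hx⟩ := F.nonempty
    have hxs : x ∈ (supp 𝒜 F).1 := by
      simp only [supp, Set.mem_iInter, Set.mem_setOf_eq]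
      intro m hm
      have h0 := hx m
      rw [hm] at h0
      simpa [hypSet, sign_eq_zero_iff] using h0
    have h1 := h hxs
    simp only [Set.mem_iInter, Set.mem_setOf_eq] at h1
    have h2 : ℓ.1 x = 0 := h1 ℓ hP
    rw [← hx ℓ, h2, sign_zero]
  · intro h x hx
    simp only [supp, Set.mem_iInter, Set.mem_setOf_eq] at hx ⊢
    exact fun ℓ hP => hx ℓ (h ℓ hP)

lemma combine_nonempty (F G : Face 𝒜) :
    (faceSet 𝒜 (combineSgn F.sgn G.sgn)).Nonempty := by
  obtain ⟨x, hx⟩ := F.nonempty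
  obtain ⟨y, hy⟩ := G.nonempty
  have key : ∀ ℓ : Idx 𝒜, ∀ᶠ ε : ℝ in nhdsWithin 0 (Set.Ioi 0),
      SignType.sign (ℓ.1 (AffineMap.lineMap x y ε)) = combineSgn F.sgn G.sgn ℓ := by
    intro ℓ
    have hform : ∀ ε : ℝ, ℓ.1 (AffineMap.lineMap x y ε) = ℓ.1 x + ε * (ℓ.1 y - ℓ.1 x) := by
      intro ε
      rw [AffineMap.apply_lineMap, AffineMap.lineMap_apply]
      simp only [vsub_eq_sub, smul_eq_mul, vadd_eq_add]
      ring
    have hF := hx ℓ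
    have hG := hy ℓ
    simp only [hform, combineSgn]
    by_cases h0 : F.sgn ℓ = 0
    · rw [if_pos h0]
      rw [h0, sign_eq_zero_iff] at hF
      filter_upwards [self_mem_nhdsWithin] with ε hε
      rw [hF, ← hG, zero_add, sub_zero, sign_mul, sign_pos hε, one_mul]
    · rw [if_neg h0]
      have hc : Filter.Tendsto (fun ε : ℝ => ℓ.1 x + ε * (ℓ.1 y - ℓ.1 x))
          (nhdsWithin 0 (Set.Ioi 0)) (nhds (ℓ.1 x)) := by
        have : Continuous (fun ε : ℝ => ℓ.1 x + ε * (ℓ.1 y - ℓ.1 x)) := by fun_prop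
        have h := this.tendsto 0
        simp only [zero_mul, add_zero] at h
        exact h.mono_left nhdsWithin_le_nhds
      have hne : ℓ.1 x ≠ 0 := by
        intro h
        rw [h, sign_zero] at hF
        exact h0 hF.symm
      rcases lt_or_gt_of_ne hne with h | h
      · filter_upwards [hc.eventually (gt_mem_nhds h)] with ε hε
        rw [← hF, sign_neg hε, sign_neg h]
      · filter_upwards [hc.eventually (lt_mem_nhds h)] with ε hε
        rw [← hF, sign_pos hε, sign_pos h]
  obtain ⟨ε, hε⟩ := (Filter.eventually_all.2 key).exists
  exact ⟨_, hε⟩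

/-- The Tits product of faces. -/
def prodFace (F G : Face 𝒜) : Face 𝒜 := ⟨combineSgn F.sgn G.sgn, combine_nonempty 𝒜 F G⟩

lemma supp_prod_iff (F G : Face 𝒜) (X : Flat 𝒜) :
    (supp 𝒜 (prodFace 𝒜 F G)).1 ⊆ X.1 ↔ (supp 𝒜 F).1 ⊆ X.1 ∧ (supp 𝒜 G).1 ⊆ X.1 := by
  obtain ⟨Z, hne, P, rfl⟩ := X
  simp only [supp_subset_iff, prodFace, combineSgn]
  rw [← forall_and]
  refine forall_congr' fun ℓ => ?_
  by_cases h : F.sgn ℓ = 0 <;> simp [h] <;> tauto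

/-- **Lemma (multiplicativity of characteristic elements).**
If `u` is characteristic of parameter `s` and `v` is characteristic of parameter `t`,
then `uv` is characteristic of parameter `st`. -/
theorem mul_isCharacteristic {n : ℕ} (𝒜 : Finset (AffForm n))
    (h𝒜 : ∀ ℓ ∈ 𝒜, ℓ.linear ≠ 0)
    (d : ℕ) (hd : ∀ X : Flat 𝒜, IsMin X → dimS X.1 = d)
    (u v : Face 𝒜 → ℝ) (s t : ℝ)
    (hu : IsCharacteristic 𝒜 d u s) (hv : IsCharacteristic 𝒜 d v t) :
    IsCharacteristic 𝒜 d (mulT 𝒜 u v) (s * t) := by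
  classical
  intro X
  rw [mul_pow, ← hu X, ← hv X, Finset.sum_mul_sum]
  have h1 : ∀ C : Face 𝒜, (if (supp 𝒜 C).1 ⊆ X.1 then mulT 𝒜 u v C else 0) =
      ∑ F : Face 𝒜, ∑ G : Face 𝒜, if C = prodFace 𝒜 F G then
        (if (supp 𝒜 C).1 ⊆ X.1 then u F * v G else 0) else 0 := by
    intro C
    have he : ∀ F G : Face 𝒜, combineSgn F.sgn G.sgn = C.sgn ↔ C = prodFace 𝒜 F G := by
      intro F G
      rw [Face.ext_iff]
      exact eq_comm
    by_cases h : (supp 𝒜 C).1 ⊆ X.1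
    · simp only [h, if_true, mulT, he]
    · simp [h]
  rw [Finset.sum_congr rfl fun C _ => h1 C, Finset.sum_comm]
  refine Finset.sum_congr rfl fun F _ => ?_
  rw [Finset.sum_comm]
  refine Finset.sum_congr rfl fun G _ => ?_
  rw [Finset.sum_ite_eq' Finset.univ (prodFace 𝒜 F G), if_pos (Finset.mem_univ _)]
  simp only [supp_prod_iff]
  by_cases hF : (supp 𝒜 F).1 ⊆ X.1 <;> by_cases hG : (supp 𝒜 G).1 ⊆ X.1 <;> simp [hF, hG]

end CharElts
end
end

section
/- Let 𝒜' ⊆ 𝒜 be a subarrangement (a subset of the hyperplanes of 𝒜) with rk(𝒜') = rk(𝒜). Let f send each face F_σ of 𝒜 to the face of 𝒜' with sign vector σ restricted to 𝒜' (this is the unique face of 𝒜' whose relative interior contains the relative interior of F_σ), and extend f linearly to a map ℝΣ[𝒜] → ℝΣ[𝒜'], so that f(Σ_F w^F H_F) = Σ_G (Σ_{F : f(F) = G} w^F) H_G. Then for every t ∈ ℝ, if w ∈ ℝΣ[𝒜] is characteristic of parameter t for 𝒜, then f(w) is characteristic of parameter t for 𝒜'. -/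
open Finset MeasureTheory

noncomputable section

namespace CharElts

variable {n : ℕ} (𝒜 : Finset (AffForm n))

/-- The face of the subarrangement `𝒜' ⊆ 𝒜` whose relative interior contains the
relative interior of a given face of `𝒜`: restrict the sign vector to `𝒜'`. -/
def restrictFace {n : ℕ} (𝒜 𝒜' : Finset (AffForm n)) (hsub : 𝒜' ⊆ 𝒜) (F : Face 𝒜) :
    Face 𝒜' :=
  ⟨fun ℓ => F.sgn ⟨ℓ.1, hsub ℓ.2⟩, by
    obtain ⟨x, hx⟩ := F.nonempty
    exact ⟨x, fun ℓ => hx ⟨ℓ.1, hsub ℓ.2⟩⟩⟩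

open Classical in
/-- The induced linear map `ℝΣ[𝒜] → ℝΣ[𝒜']` on coefficient vectors:
`f(w)^G = Σ_{F : f(F) = G} w^F`. -/
def pushW {n : ℕ} (𝒜 𝒜' : Finset (AffForm n)) (hsub : 𝒜' ⊆ 𝒜) (w : Face 𝒜 → ℝ) :
    Face 𝒜' → ℝ :=
  fun G => ∑ F : Face 𝒜, if restrictFace 𝒜 𝒜' hsub F = G then w F else 0

lemma supp_subset_iff_mem {n : ℕ} (ℬ : Finset (AffForm n)) (F : Face ℬ) (X : Flat ℬ)
    (x : V n) (hx : x ∈ faceSet ℬ F.sgn) : (supp ℬ F).1 ⊆ X.1 ↔ x ∈ X.1 := by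
  constructor
  · intro h
    apply h
    simp only [supp, Set.mem_iInter, Set.mem_setOf_eq]
    intro ℓ hℓ
    have h0 := hx ℓ
    rw [hℓ] at h0
    simpa [hypSet, sign_eq_zero_iff] using h0
  · obtain ⟨Z, hne, P, rfl⟩ := X
    intro h y hy
    simp only [supp, Set.mem_iInter, Set.mem_setOf_eq] at h hy ⊢
    intro ℓ hℓ
    apply hy ℓ
    rw [← hx ℓ]
    exact sign_eq_zero_iff.mpr (h ℓ hℓ)

lemma exists_dim_le {n : ℕ} (ℬ : Finset (AffForm n)) (d : ℕ)
    (hd : ∀ X : Flat ℬ, IsMin X → dimS X.1 = d) : d ≤ n := by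
  haveI : Nonempty (Flat ℬ) := ⟨topFlat ℬ⟩
  obtain ⟨X, -, hX⟩ := Set.Finite.exists_le_minimal (s := (Set.univ : Set (Flat ℬ)))
    Set.finite_univ (Set.mem_univ (topFlat ℬ))
  have hm : IsMin X := fun Y hY => hX.2 (Set.mem_univ Y) hY
  rw [← hd X hm]
  have := Submodule.finrank_le (vectorSpan ℝ X.1)
  simpa [dimS] using this

lemma isFlat_mono {n : ℕ} (𝒜 𝒜' : Finset (AffForm n)) (hsub : 𝒜' ⊆ 𝒜) (X : Flat 𝒜') :
    IsFlat 𝒜 X.1 := by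
  obtain ⟨Z, hne, P, rfl⟩ := X
  refine ⟨hne, fun ℓ => ∃ h : ℓ.1 ∈ 𝒜', P ⟨ℓ.1, h⟩, ?_⟩
  ext x
  simp only [Set.mem_iInter, Set.mem_setOf_eq]
  constructor
  · rintro h ℓ ⟨h1, h2⟩
    exact h ⟨ℓ.1, h1⟩ h2
  · intro h ℓ hℓ
    exact h ⟨ℓ.1, hsub ℓ.2⟩ ⟨ℓ.2, hℓ⟩

/-- **Lemma (functoriality of characteristic elements).**
If `𝒜' ⊆ 𝒜` have the same rank, then the induced map `f : ℝΣ[𝒜] → ℝΣ[𝒜']` sends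
characteristic elements of parameter `t` to characteristic elements of parameter `t`. -/
theorem pushW_isCharacteristic {n : ℕ} (𝒜 𝒜' : Finset (AffForm n)) (hsub : 𝒜' ⊆ 𝒜)
    (h𝒜 : ∀ ℓ ∈ 𝒜, ℓ.linear ≠ 0)
    (d : ℕ) (hd : ∀ X : Flat 𝒜, IsMin X → dimS X.1 = d)
    (d' : ℕ) (hd' : ∀ X : Flat 𝒜', IsMin X → dimS X.1 = d')
    (hrank : n - d' = n - d)
    (t : ℝ) (w : Face 𝒜 → ℝ) (hw : IsCharacteristic 𝒜 d w t) :
    IsCharacteristic 𝒜' d' (pushW 𝒜 𝒜' hsub w) t := by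
  classical
  have hdn := exists_dim_le 𝒜 d hd
  have hdn' := exists_dim_le 𝒜' d' hd'
  obtain rfl : d = d' := by omega
  intro X
  have hX := hw ⟨X.1, isFlat_mono 𝒜 𝒜' hsub X⟩
  refine Eq.trans ?_ hX
  have key : ∀ F : Face 𝒜,
      (supp 𝒜' (restrictFace 𝒜 𝒜' hsub F)).1 ⊆ X.1 ↔ (supp 𝒜 F).1 ⊆ X.1 := by
    intro F
    obtain ⟨x, hx⟩ := F.nonempty
    rw [supp_subset_iff_mem 𝒜' _ X x (fun ℓ => hx ⟨ℓ.1, hsub ℓ.2⟩)]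
    exact (supp_subset_iff_mem 𝒜 F ⟨X.1, isFlat_mono 𝒜 𝒜' hsub X⟩ x hx).symm
  calc (∑ G : Face 𝒜', if (supp 𝒜' G).1 ⊆ X.1 then pushW 𝒜 𝒜' hsub w G else 0)
      = ∑ G : Face 𝒜', ∑ F : Face 𝒜, if restrictFace 𝒜 𝒜' hsub F = G then
          (if (supp 𝒜' G).1 ⊆ X.1 then w F else 0) else 0 := by
        refine Finset.sum_congr rfl fun G _ => ?_
        by_cases h : (supp 𝒜' G).1 ⊆ X.1 <;> simp [h, pushW]
    _ = ∑ F : Face 𝒜, if (supp 𝒜' (restrictFace 𝒜 𝒜' hsub F)).1 ⊆ X.1 then w F else 0 := by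
        rw [Finset.sum_comm]
        refine Finset.sum_congr rfl fun F _ => ?_
        rw [Finset.sum_ite_eq]
        simp
    _ = _ := Finset.sum_congr rfl fun F _ => by simp only [key F]

end CharElts
end
end

section
/- The Tits algebra ℝΣ[𝒜] of any affine hyperplane arrangement 𝒜 is unital, and its unit element is υ = Σ_F (−1)^{rk(F)} H_F, the sum over all essentially bounded faces F of 𝒜; that is, υ · H_G = H_G = H_G · υ for every face G of 𝒜. -/
open Finset MeasureTheory

noncomputable section

namespace CharElts

variable {n : ℕ} (𝒜 : Finset (AffForm n))

lemma aff_add (ℓ : AffForm n) (x v : V n) : ℓ (x + v) = ℓ x + ℓ.linear v := by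
  have := ℓ.map_vadd x v
  simp only [vadd_eq_add] at this
  rw [add_comm x v, this, add_comm]

lemma aff_sub (ℓ : AffForm n) (x y : V n) : ℓ.linear (y - x) = ℓ y - ℓ x := by
  have := aff_add ℓ x (y - x)
  rw [add_sub_cancel] at this
  linarith

lemma aff_line (ℓ : AffForm n) (x y : V n) (t : ℝ) :
    ℓ (x + t • (y - x)) = (1 - t) * ℓ x + t * ℓ y := by
  rw [aff_add, map_smul, aff_sub, smul_eq_mul]; ring

lemma sign_comb {a b t : ℝ} {s : SignType} (ha : SignType.sign a = s) (hb : SignType.sign b = s)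
    (h0 : 0 ≤ t) (h1 : t ≤ 1) : SignType.sign ((1 - t) * a + t * b) = s := by
  cases s with
  | zero =>
    have ha' : a = 0 := sign_eq_zero_iff.1 ha
    have hb' : b = 0 := sign_eq_zero_iff.1 hb
    simp [ha', hb']
  | neg =>
    have ha' : a < 0 := sign_eq_neg_one_iff.1 ha
    have hb' : b < 0 := sign_eq_neg_one_iff.1 hb
    apply sign_eq_neg_one_iff.2
    rcases lt_or_ge t 1 with h | h
    · nlinarith [mul_neg_of_pos_of_neg (sub_pos.2 h) ha', mul_nonneg h0 (neg_nonneg.2 hb'.le)]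
    · have : t = 1 := le_antisymm h1 h
      subst this; linarith
  | pos =>
    have ha' : 0 < a := sign_eq_one_iff.1 ha
    have hb' : 0 < b := sign_eq_one_iff.1 hb
    apply sign_eq_one_iff.2
    rcases lt_or_ge t 1 with h | h
    · nlinarith [mul_pos (sub_pos.2 h) ha', mul_nonneg h0 hb'.le]
    · have : t = 1 := le_antisymm h1 h
      subst this; linarith

/-- Closed under segments. -/
def SegClosed (X : Set (V n)) : Prop :=
  ∀ x ∈ X, ∀ y ∈ X, ∀ t : ℝ, 0 ≤ t → t ≤ 1 → x + t • (y - x) ∈ X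

lemma segClosed_faceSet (σ : Idx 𝒜 → SignType) : SegClosed (faceSet 𝒜 σ) := by
  intro x hx y hy t h0 h1 ℓ
  rw [aff_line]
  exact sign_comb (hx ℓ) (hy ℓ) h0 h1

lemma exists_small (x v : V n) : ∃ ε : ℝ, 0 < ε ∧ ε ≤ 1 ∧ ∀ t : ℝ, |t| ≤ ε → ∀ ℓ ∈ 𝒜, ℓ x ≠ 0 →
    SignType.sign (ℓ (x + t • v)) = SignType.sign (ℓ x) := by
  have key : ∀ᶠ t in nhds (0 : ℝ), ∀ ℓ ∈ 𝒜, ℓ x ≠ 0 →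
      SignType.sign (ℓ (x + t • v)) = SignType.sign (ℓ x) := by
    rw [Finset.eventually_all]
    intro ℓ _
    by_cases h : ℓ x = 0
    · simp [h]
    have hc : Filter.Tendsto (fun t : ℝ => ℓ (x + t • v)) (nhds 0) (nhds (ℓ x)) := by
      have : (fun t : ℝ => ℓ (x + t • v)) = fun t => ℓ x + t * ℓ.linear v := by
        funext t; rw [aff_add, map_smul, smul_eq_mul]
      rw [this]
      have h2 : Continuous fun t : ℝ => ℓ x + t * ℓ.linear v := by fun_prop
      simpa using h2.tendsto 0
    rcases lt_or_gt_of_ne h with h' | h'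
    · filter_upwards [hc.eventually (gt_mem_nhds h')] with t ht _
      rw [sign_neg h', sign_neg ht]
    · filter_upwards [hc.eventually (lt_mem_nhds h')] with t ht _
      rw [sign_pos h', sign_pos ht]
  obtain ⟨ε, hε, h⟩ := Metric.eventually_nhds_iff.1 key
  refine ⟨min (ε / 2) 1, by positivity, min_le_right _ _, fun t ht => h ?_⟩
  rw [Real.dist_eq, sub_zero]
  have := min_le_left (ε / 2) 1
  linarith

/-- The linear directions of a sign vector. -/
def linDir (σ : Idx 𝒜 → SignType) : Submodule ℝ (V n) :=
  ⨅ ℓ : Idx 𝒜, ⨅ _ : σ ℓ = 0, LinearMap.ker ℓ.1.linear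

lemma mem_linDir {σ : Idx 𝒜 → SignType} {v : V n} :
    v ∈ linDir 𝒜 σ ↔ ∀ ℓ : Idx 𝒜, σ ℓ = 0 → ℓ.1.linear v = 0 := by
  simp [linDir, Submodule.mem_iInf]

lemma mem_dirL {v : V n} : v ∈ dirL 𝒜 ↔ ∀ ℓ ∈ 𝒜, ℓ.linear v = 0 := by
  simp [dirL, Submodule.mem_iInf]

lemma dirL_le_linDir (σ : Idx 𝒜 → SignType) : dirL 𝒜 ≤ linDir 𝒜 σ := by
  intro v hv
  rw [mem_linDir]; rw [mem_dirL] at hv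
  exact fun ℓ _ => hv ℓ.1 ℓ.2

lemma rel_open {σ : Idx 𝒜 → SignType} {x v : V n} (hx : x ∈ faceSet 𝒜 σ)
    (hv : v ∈ linDir 𝒜 σ) : ∃ ε : ℝ, 0 < ε ∧ ∀ t : ℝ, |t| ≤ ε → x + t • v ∈ faceSet 𝒜 σ := by
  obtain ⟨ε, h0, _, h⟩ := exists_small 𝒜 x v
  refine ⟨ε, h0, fun t ht ℓ => ?_⟩
  by_cases hz : ℓ.1 x = 0
  · have hs : σ ℓ = 0 := by rw [← hx ℓ, hz]; simp
    rw [aff_add, map_smul, (mem_linDir 𝒜).1 hv ℓ hs, hz, hs]; simp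
  · rw [h t ht ℓ.1 ℓ.2 hz]; exact hx ℓ

lemma vectorSpan_faceSet {σ : Idx 𝒜 → SignType} (hne : (faceSet 𝒜 σ).Nonempty) :
    vectorSpan ℝ (faceSet 𝒜 σ) = linDir 𝒜 σ := by
  apply le_antisymm
  · rw [vectorSpan_def, Submodule.span_le]
    rintro _ ⟨x, hx, y, hy, rfl⟩
    simp only [vsub_eq_sub, SetLike.mem_coe]
    rw [mem_linDir]
    intro ℓ hℓ
    have h1 := hx ℓ
    have h2 := hy ℓ
    rw [hℓ, sign_eq_zero_iff] at h1 h2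
    rw [aff_sub, h1, h2, sub_zero]
  · intro v hv
    obtain ⟨x, hx⟩ := hne
    obtain ⟨ε, h0, h⟩ := rel_open 𝒜 hx hv
    have h1 := h ε (abs_of_pos h0).le
    have h2 := vsub_mem_vectorSpan ℝ h1 hx
    simp only [vsub_eq_sub, add_sub_cancel_left] at h2
    have := Submodule.smul_mem _ ε⁻¹ h2
    rwa [smul_smul, inv_mul_cancel₀ h0.ne', one_smul] at this

/-- All functionals of the arrangement are bounded on `X`. -/
def Bd (X : Set (V n)) : Prop := ∀ ℓ ∈ 𝒜, ∃ M : ℝ, ∀ x ∈ X, |ℓ x| ≤ M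

lemma bounded_iff (X : Set (V n)) : Bornology.IsBounded ((dirL 𝒜).mkQ '' X) ↔ Bd 𝒜 X := by
  constructor
  · intro hb ℓ hℓ
    have : IsClosed ((dirL 𝒜 : Submodule ℝ (V n)) : Set (V n)) :=
      Submodule.closed_of_finiteDimensional _
    have hle : dirL 𝒜 ≤ LinearMap.ker ℓ.linear := fun v hv => (mem_dirL 𝒜).1 hv ℓ hℓ
    let f : (V n ⧸ dirL 𝒜) →L[ℝ] ℝ := LinearMap.toContinuousLinearMap ((dirL 𝒜).liftQ ℓ.linear hle)
    obtain ⟨M, hM⟩ := hb.exists_norm_le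
    refine ⟨‖f‖ * M + |ℓ 0|, fun x hx => ?_⟩
    have h1 : f ((dirL 𝒜).mkQ x) = ℓ.linear x := by simp [f]
    have h2 := f.le_opNorm ((dirL 𝒜).mkQ x)
    have h3 := hM _ ⟨x, hx, rfl⟩
    have h4 : ℓ x = ℓ 0 + ℓ.linear x := by rw [← aff_add, zero_add]
    have h5 := mul_le_mul_of_nonneg_left h3 (norm_nonneg f)
    rw [h1, Real.norm_eq_abs] at h2
    rw [h4]
    have := abs_add_le (ℓ 0) (ℓ.linear x)
    linarith
  · intro hb
    choose! M hM using hb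
    let Φ0 : V n →ₗ[ℝ] (Idx 𝒜 → ℝ) := LinearMap.pi fun ℓ => ℓ.1.linear
    have hker : LinearMap.ker Φ0 = dirL 𝒜 := by
      ext v
      rw [mem_dirL, LinearMap.mem_ker]
      constructor
      · intro h ℓ hℓ; exact congrFun h ⟨ℓ, hℓ⟩
      · intro h; funext ℓ; exact h ℓ.1 ℓ.2
    let Φ : (V n ⧸ dirL 𝒜) →ₗ[ℝ] (Idx 𝒜 → ℝ) := (dirL 𝒜).liftQ Φ0 hker.ge
    have hinj : LinearMap.ker Φ = ⊥ := Submodule.ker_liftQ_eq_bot _ _ _ hker.le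
    obtain ⟨g, hg⟩ := Φ.exists_leftInverse_of_injective hinj
    let g' : (Idx 𝒜 → ℝ) →L[ℝ] (V n ⧸ dirL 𝒜) := LinearMap.toContinuousLinearMap g
    have hB : Bornology.IsBounded (Φ0 '' X) := by
      rw [← Bornology.forall_isBounded_image_eval_iff]
      intro ℓ
      rw [isBounded_iff_forall_norm_le]
      refine ⟨M ℓ.1 + |ℓ.1 0|, ?_⟩
      rintro _ ⟨_, ⟨x, hx, rfl⟩, rfl⟩
      have h4 : ℓ.1 x = ℓ.1 0 + ℓ.1.linear x := by rw [← aff_add, zero_add]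
      have h5 := hM ℓ.1 ℓ.2 x hx
      show |ℓ.1.linear x| ≤ _
      have : ℓ.1.linear x = ℓ.1 x - ℓ.1 0 := by linarith
      rw [this]
      have := abs_sub (ℓ.1 x) (ℓ.1 0)
      linarith
    have h6 : (dirL 𝒜).mkQ '' X = g' '' (Φ0 '' X) := by
      rw [Set.image_image]
      apply Set.image_congr
      intro x _
      have := LinearMap.congr_fun hg ((dirL 𝒜).mkQ x)
      simpa [Φ, g'] using this.symm
    rw [h6]
    exact g'.lipschitz.isBounded_image hB

lemma bd_of_dirL {h : AffForm n} (hh : ∀ v ∈ dirL 𝒜, h.linear v = 0) {X : Set (V n)}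
    (hX : Bd 𝒜 X) : ∃ M : ℝ, ∀ x ∈ X, |h x| ≤ M := by
  have hs : h.linear ∈ Submodule.span ℝ (Set.range fun ℓ : Idx 𝒜 => ℓ.1.linear) :=
    mem_span_of_iInf_ker_le_ker (fun v hv => hh v hv)
  obtain ⟨c, hc⟩ := (Submodule.mem_span_range_iff_exists_fun ℝ).1 hs
  choose! M hM using hX
  refine ⟨|h 0| + ∑ ℓ : Idx 𝒜, |c ℓ| * (M ℓ.1 + |ℓ.1 0|), fun x hx => ?_⟩
  have h4 : h x = h 0 + h.linear x := by rw [← aff_add, zero_add]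
  rw [h4, ← hc]
  refine (abs_add_le _ _).trans (add_le_add le_rfl ?_)
  rw [LinearMap.sum_apply]
  refine (Finset.abs_sum_le_sum_abs _ _).trans (Finset.sum_le_sum fun ℓ _ => ?_)
  rw [LinearMap.smul_apply, smul_eq_mul, abs_mul]
  refine mul_le_mul_of_nonneg_left ?_ (abs_nonneg _)
  have h4 : ℓ.1 x = ℓ.1 0 + ℓ.1.linear x := by rw [← aff_add, zero_add]
  have h5 := hM ℓ.1 ℓ.2 x hx
  have : ℓ.1.linear x = ℓ.1 x - ℓ.1 0 := by linarith
  rw [this]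
  have := abs_sub (ℓ.1 x) (ℓ.1 0)
  linarith

lemma cross {X : Set (V n)} (hX : SegClosed X) (h : AffForm n) {x q : V n} (hx : x ∈ X)
    (hq : q ∈ X) (hhx : 0 < h x) (hhq : h q < 0) :
    ∃ t : ℝ, 0 < t ∧ t * (h x - h q) = - h q ∧ q + t • (x - q) ∈ X ∧ h (q + t • (x - q)) = 0 := by
  have hd : 0 < h x - h q := by linarith
  have ht : 0 < - h q / (h x - h q) := div_pos (by linarith) hd
  refine ⟨_, ht, div_mul_cancel₀ _ hd.ne', hX q hq x hx _ ht.le ?_, ?_⟩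
  · rw [div_le_one hd]; linarith
  · rw [aff_line]; field_simp; ring

lemma bd_half {X : Set (V n)} (hX : SegClosed X) (h ℓ : AffForm n) {q : V n}
    (hq : q ∈ X) (hhq : h q < 0) {K M : ℝ} (hK : ∀ x ∈ X, h x = 0 → |ℓ x| ≤ K)
    (hM : ∀ x ∈ X, 0 < h x → h x ≤ M) : ∃ K' : ℝ, ∀ x ∈ X, 0 < h x → |ℓ x| ≤ K' := by
  refine ⟨|ℓ q| + (K + |ℓ q|) * ((M - h q) / (- h q)), fun x hx hhx => ?_⟩
  obtain ⟨t, ht, hte, hm, h0⟩ := cross hX h hx hq hhx hhq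
  have h1 := hK _ hm h0
  rw [aff_line] at h1
  have h2 := hM x hx hhx
  have hq' : 0 < - h q := by linarith
  have h3 : t * |ℓ x - ℓ q| ≤ K + |ℓ q| := by
    have e : t * |ℓ x - ℓ q| = |t * (ℓ x - ℓ q)| := by rw [abs_mul, abs_of_pos ht]
    rw [e]
    have : t * (ℓ x - ℓ q) = ((1 - t) * ℓ q + t * ℓ x) - ℓ q := by ring
    rw [this]
    have := abs_sub ((1 - t) * ℓ q + t * ℓ x) (ℓ q)
    linarith
  have h4 : 1 ≤ t * ((M - h q) / (- h q)) := by
    rw [← mul_div_assoc, le_div_iff₀ hq', one_mul, ← hte]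
    exact mul_le_mul_of_nonneg_left (by linarith) ht.le
  have h5 : 0 ≤ (M - h q) / (- h q) := div_nonneg (by linarith) hq'.le
  have h6 : |ℓ x - ℓ q| ≤ (K + |ℓ q|) * ((M - h q) / (- h q)) := by
    calc |ℓ x - ℓ q| = |ℓ x - ℓ q| * 1 := by ring
      _ ≤ |ℓ x - ℓ q| * (t * ((M - h q) / (- h q))) := mul_le_mul_of_nonneg_left h4 (abs_nonneg _)
      _ = (t * |ℓ x - ℓ q|) * ((M - h q) / (- h q)) := by ring
      _ ≤ _ := mul_le_mul_of_nonneg_right h3 h5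
  have h7 := abs_add_le (ℓ q) (ℓ x - ℓ q)
  rw [add_sub_cancel] at h7
  linarith

lemma exists_level {X : Set (V n)} (hX : SegClosed X) (h : AffForm n) {p x : V n} (hp : p ∈ X)
    (hx : x ∈ X) (hhp : h p = 0) {N : ℝ} (hN : 0 < N) (hxN : N ≤ h x) :
    ∃ y ∈ X, h y = N := by
  have hx0 : 0 < h x := by linarith
  refine ⟨p + (N / h x) • (x - p), hX p hp x hx _ (by positivity) ?_, ?_⟩
  · rwa [div_le_one hx0]
  · rw [aff_line, hhp]; field_simp; ring

lemma abs_le_of_same_sign {a b : ℝ} (h : SignType.sign a = SignType.sign b) : |a| ≤ |a + b| := by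
  rcases lt_trichotomy a 0 with ha | ha | ha
  · have hb : b < 0 := by rw [sign_neg ha] at h; exact sign_eq_neg_one_iff.1 h.symm
    rw [abs_of_neg ha, abs_of_neg (by linarith)]; linarith
  · simp [ha]
  · have hb : 0 < b := by rw [sign_pos ha] at h; exact sign_eq_one_iff.1 h.symm
    rw [abs_of_pos ha, abs_of_pos (by linarith)]; linarith

/-- If the slice is bounded, one of the two sides is bounded. -/
lemma one_side (σ : Idx 𝒜 → SignType) (h : AffForm n) (hh : ∀ v ∈ dirL 𝒜, h.linear v = 0)
    {p a b : V n} (hp : p ∈ faceSet 𝒜 σ) (ha : a ∈ faceSet 𝒜 σ) (hb : b ∈ faceSet 𝒜 σ)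
    (hhp : h p = 0) (hha : 0 < h a) (hhb : h b < 0)
    (h0 : Bd 𝒜 (faceSet 𝒜 σ ∩ {x | h x = 0})) :
    Bd 𝒜 (faceSet 𝒜 σ ∩ {x | 0 < h x}) ∨ Bd 𝒜 (faceSet 𝒜 σ ∩ {x | h x < 0}) := by
  have hX := segClosed_faceSet 𝒜 σ
  by_contra hcon
  rw [not_or] at hcon
  obtain ⟨hc1, hc2⟩ := hcon
  have u1 : ∀ N : ℝ, ∃ x ∈ faceSet 𝒜 σ, N ≤ h x := by
    intro N
    by_contra hno
    push Not at hno
    apply hc1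
    intro ℓ hℓ
    obtain ⟨K, hK⟩ := h0 ℓ hℓ
    obtain ⟨K', hK'⟩ := bd_half hX h ℓ hb hhb (fun x hx hx0 => hK x ⟨hx, hx0⟩)
      (fun x hx _ => (hno x hx).le)
    exact ⟨K', fun x hx => hK' x hx.1 hx.2⟩
  have u2 : ∀ N : ℝ, ∃ x ∈ faceSet 𝒜 σ, N ≤ (-h) x := by
    intro N
    by_contra hno
    push Not at hno
    apply hc2
    intro ℓ hℓ
    obtain ⟨K, hK⟩ := h0 ℓ hℓ
    obtain ⟨K', hK'⟩ := bd_half hX (-h) ℓ ha (by simpa using hha)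
      (fun x hx hx0 => hK x ⟨hx, by simpa using hx0⟩)
      (fun x hx _ => (hno x hx).le)
    exact ⟨K', fun x hx => hK' x hx.1 (by simpa using hx.2)⟩
  choose! K hK using h0
  obtain ⟨M, hM⟩ := bd_of_dirL 𝒜 hh (X := {x | ∀ ℓ ∈ 𝒜, |ℓ x| ≤ 2 * K ℓ})
    (fun ℓ hℓ => ⟨2 * K ℓ, fun x hx => hx ℓ hℓ⟩)
  obtain ⟨x', hx', hxN'⟩ := u1 (|M| + 1)
  obtain ⟨y', hy', hyN'⟩ := u2 (|M| + 1)
  have hpos : 0 < |M| + 1 := by positivity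
  obtain ⟨x, hx, hxN⟩ := exists_level hX h hp hx' hhp hpos hxN'
  obtain ⟨y, hy, hyN⟩ := exists_level hX (-h) hp hy' (by simpa using hhp) hpos hyN'
  have hyN2 : h y = -(|M| + 1) := by
    have : (-h) y = - h y := rfl
    linarith
  have hm := hX x hx y hy (1 / 2) (by norm_num) (by norm_num)
  have hm0 : h (x + (1 / 2 : ℝ) • (y - x)) = 0 := by rw [aff_line, hxN, hyN2]; ring
  have := hM x (by
    intro ℓ hℓ
    have h1 := hK ℓ hℓ _ ⟨hm, hm0⟩
    rw [aff_line] at h1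
    have h2 := abs_le_of_same_sign (a := ℓ x) (b := ℓ y) (by rw [hx ⟨ℓ, hℓ⟩, hy ⟨ℓ, hℓ⟩])
    have h3 : ℓ x + ℓ y = 2 * ((1 - 1 / 2) * ℓ x + 1 / 2 * ℓ y) := by ring
    rw [h3, abs_mul, abs_two] at h2
    linarith)
  rw [hxN, abs_of_pos hpos] at this
  have := le_abs_self M
  linarith

/-- If one open side is bounded, so is the slice. -/
lemma slice_bd (ℬ : Finset (AffForm n)) {Y Z : Set (V n)} {y : V n} (hy : y ∈ Y)
    (hmid : ∀ z ∈ Z, z + (1 / 2 : ℝ) • (y - z) ∈ Y) (hY : Bd ℬ Y) : Bd ℬ Z := by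
  intro ℓ hℓ
  obtain ⟨M, hM⟩ := hY ℓ hℓ
  refine ⟨2 * M + M, fun z hz => ?_⟩
  have h1 := hM _ (hmid z hz)
  have h2 := hM y hy
  rw [aff_line] at h1
  rw [abs_le] at *
  constructor <;> linarith

/-- The face containing a point. -/
def faceOf (x : V n) : Face 𝒜 := ⟨fun ℓ => SignType.sign (ℓ.1 x), ⟨x, fun _ => rfl⟩⟩

lemma mem_carrier {F : Face 𝒜} {x : V n} : x ∈ F.carrier 𝒜 ↔ F = faceOf 𝒜 x := by
  constructor
  · intro h
    apply Face.ext
    funext ℓ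
    exact (h ℓ).symm
  · rintro rfl
    exact fun _ => rfl

variable {𝒜} in
/-- Restriction of a face to a subarrangement. -/
def res {ℬ : Finset (AffForm n)} (h : ℬ ⊆ 𝒜) (F : Face 𝒜) : Face ℬ :=
  ⟨fun ℓ => F.sgn ⟨ℓ.1, h ℓ.2⟩, by
    obtain ⟨x, hx⟩ := F.nonempty
    exact ⟨x, fun ℓ => hx ⟨ℓ.1, h ℓ.2⟩⟩⟩

open Classical in
/-- The weight of a set. -/
def wt (X : Set (V n)) : ℝ :=
  if Bd 𝒜 X then (-1 : ℝ) ^ (dimS X - Module.finrank ℝ (dirL 𝒜)) else 0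

/-- The part of `X` where `h` has sign `s`. -/
def slice (X : Set (V n)) (h : AffForm n) (s : SignType) : Set (V n) :=
  X ∩ {x | SignType.sign (h x) = s}

lemma finrank_inf_ker (W : Submodule ℝ (V n)) (f : V n →ₗ[ℝ] ℝ) {v : V n} (hv : v ∈ W)
    (hf : f v ≠ 0) :
    Module.finrank ℝ (W ⊓ LinearMap.ker f : Submodule ℝ (V n)) + 1 = Module.finrank ℝ W := by
  have h1 := LinearMap.finrank_range_add_finrank_ker (f.domRestrict W)
  have h2 : LinearMap.range (f.domRestrict W) = ⊤ := by
    apply LinearMap.range_eq_top.2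
    apply LinearMap.surjective
    intro h0
    exact hf (LinearMap.congr_fun h0 ⟨v, hv⟩)
  have h3 : (LinearMap.ker (f.domRestrict W)).map W.subtype = W ⊓ LinearMap.ker f := by
    ext x
    simp only [Submodule.mem_map, LinearMap.mem_ker, Submodule.mem_inf]
    constructor
    · rintro ⟨y, hy, rfl⟩
      exact ⟨y.2, hy⟩
    · rintro ⟨hx, hx0⟩
      exact ⟨⟨x, hx⟩, hx0, rfl⟩
  rw [← h3, Submodule.finrank_map_subtype_eq]
  rw [h2, finrank_top, Module.finrank_self] at h1
  omega

section Deletion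

variable (ℬ : Finset (AffForm n)) (H : AffForm n)

lemma carrier_eq_slice (hB : ℬ ⊆ 𝒜) (hH : H ∈ 𝒜) (hA : ∀ ℓ, ℓ ∈ 𝒜 ↔ ℓ = H ∨ ℓ ∈ ℬ)
    (F : Face 𝒜) : F.carrier 𝒜 = slice ((res hB F).carrier ℬ) H (F.sgn ⟨H, hH⟩) := by
  ext x
  constructor
  · intro hx
    exact ⟨fun ℓ => hx ⟨ℓ.1, hB ℓ.2⟩, hx ⟨H, hH⟩⟩
  · rintro ⟨h1, h2⟩ ⟨ℓ, hℓ⟩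
    rcases (hA ℓ).1 hℓ with rfl | h
    · exact h2
    · exact h1 ⟨ℓ, h⟩

open Classical in
lemma fiber_sum (hB : ℬ ⊆ 𝒜) (hH : H ∈ 𝒜) (hA : ∀ ℓ, ℓ ∈ 𝒜 ↔ ℓ = H ∨ ℓ ∈ ℬ)
    (F' : Face ℬ) (f : Set (V n) → ℝ) :
    (∑ F : Face 𝒜, if res hB F = F' then f (F.carrier 𝒜) else 0) =
      ∑ s : SignType, if (slice (F'.carrier ℬ) H s).Nonempty
        then f (slice (F'.carrier ℬ) H s) else 0 := by
  have h1 : ∀ F : Face 𝒜, (if res hB F = F' then f (F.carrier 𝒜) else 0) =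
      ∑ s : SignType, if res hB F = F' ∧ F.sgn ⟨H, hH⟩ = s then f (F.carrier 𝒜) else 0 := by
    intro F
    by_cases h : res hB F = F' <;> simp [h]
  rw [Finset.sum_congr rfl fun F _ => h1 F, Finset.sum_comm]
  refine Finset.sum_congr rfl fun s _ => ?_
  split_ifs with hne
  · obtain ⟨x, hx⟩ := hne
    have hres : res hB (faceOf 𝒜 x) = F' := by
      rw [(mem_carrier ℬ).1 hx.1]; rfl
    have hs : (faceOf 𝒜 x).sgn ⟨H, hH⟩ = s := hx.2
    rw [Finset.sum_eq_single (faceOf 𝒜 x)]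
    · rw [if_pos ⟨hres, hs⟩, carrier_eq_slice 𝒜 ℬ H hB hH hA, hres, hs]
    · intro F _ hF
      rw [if_neg]
      rintro ⟨h2, h3⟩
      apply hF
      rw [← mem_carrier, carrier_eq_slice 𝒜 ℬ H hB hH hA, h2, h3]
      exact hx
    · simp
  · apply Finset.sum_eq_zero
    intro F _
    rw [if_neg]
    rintro ⟨h2, h3⟩
    apply hne
    rw [← h2, ← h3, ← carrier_eq_slice 𝒜 ℬ H hB hH hA]
    exact F.nonempty

lemma dirL_eq (hA : ∀ ℓ, ℓ ∈ 𝒜 ↔ ℓ = H ∨ ℓ ∈ ℬ) :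
    dirL 𝒜 = dirL ℬ ⊓ LinearMap.ker H.linear := by
  ext v
  rw [Submodule.mem_inf, mem_dirL, mem_dirL, LinearMap.mem_ker]
  constructor
  · intro h
    exact ⟨fun ℓ hℓ => h ℓ ((hA ℓ).2 (Or.inr hℓ)), h H ((hA H).2 (Or.inl rfl))⟩
  · rintro ⟨h1, h2⟩ ℓ hℓ
    rcases (hA ℓ).1 hℓ with rfl | h
    · exact h2
    · exact h1 ℓ h

lemma Bd_iff (hA : ∀ ℓ, ℓ ∈ 𝒜 ↔ ℓ = H ∨ ℓ ∈ ℬ) (X : Set (V n)) :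
    Bd 𝒜 X ↔ Bd ℬ X ∧ ∃ M : ℝ, ∀ x ∈ X, |H x| ≤ M := by
  constructor
  · intro h
    exact ⟨fun ℓ hℓ => h ℓ ((hA ℓ).2 (Or.inr hℓ)), h H ((hA H).2 (Or.inl rfl))⟩
  · rintro ⟨h1, h2⟩ ℓ hℓ
    rcases (hA ℓ).1 hℓ with rfl | h
    · exact h2
    · exact h1 ℓ h

lemma dimS_carrier (F : Face 𝒜) : dimS (F.carrier 𝒜) = Module.finrank ℝ (linDir 𝒜 F.sgn) := by
  unfold dimS Face.carrier
  rw [vectorSpan_faceSet 𝒜 F.nonempty]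

lemma dimS_slice_ne (hB : ℬ ⊆ 𝒜) (hH : H ∈ 𝒜) (hA : ∀ ℓ, ℓ ∈ 𝒜 ↔ ℓ = H ∨ ℓ ∈ ℬ)
    (F' : Face ℬ) {s : SignType} (hs : s ≠ 0) {x : V n} (hx : x ∈ slice (F'.carrier ℬ) H s) :
    dimS (slice (F'.carrier ℬ) H s) = dimS (F'.carrier ℬ) := by
  have hF' := (mem_carrier ℬ).1 hx.1
  have hsx : SignType.sign (H x) = s := hx.2
  have h1 : slice (F'.carrier ℬ) H s = (faceOf 𝒜 x).carrier 𝒜 := by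
    rw [carrier_eq_slice 𝒜 ℬ H hB hH hA, hF', ← hsx]; rfl
  rw [h1, dimS_carrier, dimS_carrier, hF']
  suffices h : linDir 𝒜 (faceOf 𝒜 x).sgn = linDir ℬ (faceOf ℬ x).sgn by rw [h]
  ext v
  rw [mem_linDir, mem_linDir]
  constructor
  · intro h ℓ hℓ
    exact h ⟨ℓ.1, hB ℓ.2⟩ hℓ
  · rintro h ⟨ℓ, hm⟩ hℓ
    rcases (hA ℓ).1 hm with rfl | h'
    · exact absurd (hsx.symm.trans hℓ) hs
    · exact h ⟨ℓ, h'⟩ hℓ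

lemma dimS_slice_zero (hB : ℬ ⊆ 𝒜) (hH : H ∈ 𝒜) (hA : ∀ ℓ, ℓ ∈ 𝒜 ↔ ℓ = H ∨ ℓ ∈ ℬ)
    (F' : Face ℬ) {x y : V n} (hx : x ∈ slice (F'.carrier ℬ) H 0) (hy : y ∈ F'.carrier ℬ)
    (hHy : H y ≠ 0) :
    dimS (slice (F'.carrier ℬ) H 0) + 1 = dimS (F'.carrier ℬ) := by
  have hF' := (mem_carrier ℬ).1 hx.1
  have hsx : SignType.sign (H x) = 0 := hx.2
  have hHx : H x = 0 := sign_eq_zero_iff.1 hsx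
  have h1 : slice (F'.carrier ℬ) H 0 = (faceOf 𝒜 x).carrier 𝒜 := by
    rw [carrier_eq_slice 𝒜 ℬ H hB hH hA, hF', ← hsx]; rfl
  rw [h1, dimS_carrier, dimS_carrier]
  have hv : y - x ∈ linDir ℬ F'.sgn := by
    rw [← vectorSpan_faceSet ℬ F'.nonempty]
    exact vsub_mem_vectorSpan ℝ hy hx.1
  rw [← finrank_inf_ker _ H.linear hv (by rw [aff_sub, hHx, sub_zero]; exact hHy)]
  suffices h : linDir 𝒜 (faceOf 𝒜 x).sgn = linDir ℬ F'.sgn ⊓ LinearMap.ker H.linear by rw [h]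
  ext v
  rw [Submodule.mem_inf, mem_linDir, mem_linDir, LinearMap.mem_ker, hF']
  constructor
  · intro h
    exact ⟨fun ℓ hℓ => h ⟨ℓ.1, hB ℓ.2⟩ hℓ, h ⟨H, hH⟩ hsx⟩
  · rintro ⟨h, h0⟩ ⟨ℓ, hm⟩ hℓ
    rcases (hA ℓ).1 hm with rfl | h'
    · exact h0
    · exact h ⟨ℓ, h'⟩ hℓ

lemma finrank_le_dimS (F : Face 𝒜) : Module.finrank ℝ (dirL 𝒜) ≤ dimS (F.carrier 𝒜) := by
  rw [dimS_carrier]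
  exact Submodule.finrank_mono (dirL_le_linDir 𝒜 _)

lemma shift_mem {F : Face 𝒜} {x r : V n} (hx : x ∈ F.carrier 𝒜) (hr : r ∈ dirL 𝒜) (t : ℝ) :
    x + t • r ∈ F.carrier 𝒜 := by
  intro ℓ
  rw [aff_add, map_smul, (mem_dirL 𝒜).1 hr ℓ.1 ℓ.2]
  simpa using hx ℓ

/-- A face with a non-constant sign of `H` meets all three parts. -/
lemma all_signs (F : Face ℬ) {x y : V n} (hx : x ∈ F.carrier ℬ) (hy : y ∈ F.carrier ℬ)
    (hxy : SignType.sign (H x) ≠ SignType.sign (H y)) :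
    (∃ p ∈ F.carrier ℬ, H p = 0) ∧ (∃ a ∈ F.carrier ℬ, 0 < H a) ∧
      (∃ b ∈ F.carrier ℬ, H b < 0) := by
  have hX : SegClosed (F.carrier ℬ) := segClosed_faceSet ℬ F.sgn
  have refl' : ∀ p ∈ F.carrier ℬ, ∀ a ∈ F.carrier ℬ, H p = 0 →
      ∃ t : ℝ, 0 < t ∧ ∃ b ∈ F.carrier ℬ, H b = - t * H a := by
    intro p hp a ha hp0
    have hv : a - p ∈ linDir ℬ F.sgn := by
      rw [← vectorSpan_faceSet ℬ F.nonempty]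
      exact vsub_mem_vectorSpan ℝ ha hp
    obtain ⟨ε, h0, h⟩ := rel_open ℬ hp hv
    refine ⟨ε, h0, _, h (-ε) (by rw [abs_neg, abs_of_pos h0]), ?_⟩
    rw [aff_line, hp0]; ring
  rcases lt_trichotomy (H x) 0 with h1 | h1 | h1 <;> rcases lt_trichotomy (H y) 0 with h2 | h2 | h2
  · exact absurd (by rw [sign_neg h1, sign_neg h2]) hxy
  · obtain ⟨t, ht, b, hb, hb'⟩ := refl' y hy x hx h2
    exact ⟨⟨y, hy, h2⟩, ⟨b, hb, by rw [hb']; nlinarith⟩, ⟨x, hx, h1⟩⟩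
  · obtain ⟨t, _, _, hm, h0⟩ := cross hX H hy hx h2 h1
    exact ⟨⟨_, hm, h0⟩, ⟨y, hy, h2⟩, ⟨x, hx, h1⟩⟩
  · obtain ⟨t, ht, b, hb, hb'⟩ := refl' x hx y hy h1
    exact ⟨⟨x, hx, h1⟩, ⟨b, hb, by rw [hb']; nlinarith⟩, ⟨y, hy, h2⟩⟩
  · exact absurd (by rw [h1, h2]) hxy
  · obtain ⟨t, ht, b, hb, hb'⟩ := refl' x hx y hy h1
    exact ⟨⟨x, hx, h1⟩, ⟨y, hy, h2⟩, ⟨b, hb, by rw [hb']; nlinarith⟩⟩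
  · obtain ⟨t, _, _, hm, h0⟩ := cross hX H hx hy h1 h2
    exact ⟨⟨_, hm, h0⟩, ⟨x, hx, h1⟩, ⟨y, hy, h2⟩⟩
  · obtain ⟨t, ht, b, hb, hb'⟩ := refl' y hy x hx h2
    exact ⟨⟨y, hy, h2⟩, ⟨x, hx, h1⟩, ⟨b, hb, by rw [hb']; nlinarith⟩⟩
  · exact absurd (by rw [sign_pos h1, sign_pos h2]) hxy

lemma slice_zero_eq (X : Set (V n)) : slice X H 0 = X ∩ {x | H x = 0} := by
  ext x; simp [slice, sign_eq_zero_iff]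

lemma slice_pos_eq (X : Set (V n)) : slice X H 1 = X ∩ {x | 0 < H x} := by
  ext x; simp [slice, sign_eq_one_iff]

lemma slice_neg_eq (X : Set (V n)) : slice X H (-1) = X ∩ {x | H x < 0} := by
  ext x; simp [slice, sign_eq_neg_one_iff]

lemma dir_zero_of_bdd {F : Face ℬ} {M : ℝ} {s : SignType} (hs : s ≠ 0)
    {x : V n} (hx : x ∈ slice (F.carrier ℬ) H s)
    (hM : ∀ y ∈ slice (F.carrier ℬ) H s, |H y| ≤ M) : ∀ v ∈ dirL ℬ, H.linear v = 0 := by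
  intro v hv
  by_contra hne
  have hsx : SignType.sign (H x) = s := hx.2
  have hHx : H x ≠ 0 := by
    intro h0; rw [h0, sign_zero] at hsx; exact hs hsx.symm
  have hpos : 0 < |H x| := abs_pos.2 hHx
  let k : ℝ := 1 + |M| / |H x|
  have hk : 0 < k := by positivity
  have hval : H (x + ((k - 1) * H x / H.linear v) • v) = k * H x := by
    rw [aff_add, map_smul, smul_eq_mul, div_mul_cancel₀ _ hne]; ring
  have hmem : x + ((k - 1) * H x / H.linear v) • v ∈ slice (F.carrier ℬ) H s := by
    refine ⟨shift_mem ℬ hx.1 hv _, ?_⟩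
    show SignType.sign _ = s
    rw [hval, sign_mul, sign_pos hk, one_mul, hsx]
  have h1 := hM _ hmem
  rw [hval, abs_mul, abs_of_pos hk] at h1
  have h2 : k * |H x| = |H x| + |M| := by simp only [k]; field_simp
  have := le_abs_self M
  linarith

open Classical in
lemma key (hB : ℬ ⊆ 𝒜) (hH : H ∈ 𝒜) (hA : ∀ ℓ, ℓ ∈ 𝒜 ↔ ℓ = H ∨ ℓ ∈ ℬ)
    (hlin : H.linear ≠ 0) (F' : Face ℬ) :
    (∑ F : Face 𝒜, if res hB F = F' then wt 𝒜 (F.carrier 𝒜) else 0) = wt ℬ (F'.carrier ℬ) := by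
  rw [fiber_sum 𝒜 ℬ H hB hH hA F' (wt 𝒜)]
  set X := F'.carrier ℬ with hXdef
  have hX : SegClosed X := segClosed_faceSet ℬ F'.sgn
  obtain ⟨p0, hp0⟩ : X.Nonempty := F'.nonempty
  have hL := dirL_eq 𝒜 ℬ H hA
  by_cases hconst : ∀ x ∈ X, SignType.sign (H x) = SignType.sign (H p0)
  · -- not cut
    have hs : ∀ s, s ≠ SignType.sign (H p0) → ¬ (slice X H s).Nonempty := by
      rintro s hs ⟨x, hx⟩
      exact hs (hx.2.symm.trans (hconst x hx.1))
    have hs0 : slice X H (SignType.sign (H p0)) = X := by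
      apply Set.inter_eq_left.2
      exact hconst
    rw [Finset.sum_eq_single (SignType.sign (H p0)) (fun s _ h => if_neg (hs s h)) (by simp),
      hs0, if_pos ⟨p0, hp0⟩]
    have hdir : ∀ v ∈ dirL ℬ, H.linear v = 0 := by
      intro v hv
      by_contra hne
      have h1 : ∀ c : ℝ, SignType.sign c = SignType.sign (H p0) := by
        intro c
        have := hconst _ (shift_mem ℬ hp0 hv ((c - H p0) / H.linear v))
        rwa [aff_add, map_smul, smul_eq_mul, div_mul_cancel₀ _ hne, add_sub_cancel] at this
      have h2 := (h1 1).trans (h1 0).symm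
      simp at h2
    have hL' : dirL 𝒜 = dirL ℬ := by
      rw [hL]; exact inf_eq_left.2 fun v hv => hdir v hv
    have hbd : Bd 𝒜 X ↔ Bd ℬ X := by
      rw [Bd_iff 𝒜 ℬ H hA]
      exact ⟨fun h => h.1, fun h => ⟨h, bd_of_dirL ℬ hdir h⟩⟩
    unfold wt
    rw [hL']
    simp only [hbd]
  · push Not at hconst
    obtain ⟨x, hx, hne⟩ := hconst
    obtain ⟨⟨p, hp, hHp⟩, ⟨a, ha, hHa⟩, ⟨b, hb, hHb⟩⟩ := all_signs ℬ H F' hx hp0 hne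
    have hpm : p ∈ slice X H 0 := by rw [slice_zero_eq]; exact ⟨hp, hHp⟩
    have ham : a ∈ slice X H 1 := by rw [slice_pos_eq]; exact ⟨ha, hHa⟩
    have hbm : b ∈ slice X H (-1) := by rw [slice_neg_eq]; exact ⟨hb, hHb⟩
    have huniv : (Finset.univ : Finset SignType) = {0, 1, -1} := by decide
    rw [huniv, Finset.sum_insert (by decide), Finset.sum_insert (by decide), Finset.sum_singleton,
      if_pos ⟨p, hpm⟩, if_pos ⟨a, ham⟩, if_pos ⟨b, hbm⟩]
    have d0 := dimS_slice_zero 𝒜 ℬ H hB hH hA F' hpm ha hHa.ne'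
    have d1 := dimS_slice_ne 𝒜 ℬ H hB hH hA F' (by decide) ham
    have d2 := dimS_slice_ne 𝒜 ℬ H hB hH hA F' (by decide) hbm
    rw [← hXdef] at d0 d1 d2
    have hdX := finrank_le_dimS ℬ F'
    rw [← hXdef] at hdX
    unfold wt
    rw [d1, d2]
    by_cases hdir : ∀ v ∈ dirL ℬ, H.linear v = 0
    · have hL' : dirL 𝒜 = dirL ℬ := by
        rw [hL]; exact inf_eq_left.2 fun v hv => hdir v hv
      have hbd : ∀ Y : Set (V n), Bd 𝒜 Y ↔ Bd ℬ Y := by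
        intro Y
        rw [Bd_iff 𝒜 ℬ H hA]
        exact ⟨fun h => h.1, fun h => ⟨h, bd_of_dirL ℬ hdir h⟩⟩
      have hd0 : Module.finrank ℝ (dirL ℬ) ≤ dimS (slice X H 0) := by
        have h1 : slice X H 0 = (faceOf 𝒜 p).carrier 𝒜 := by
          have hsx : SignType.sign (H p) = 0 := hpm.2
          rw [carrier_eq_slice 𝒜 ℬ H hB hH hA, hXdef, (mem_carrier ℬ).1 hp, ← hsx]; rfl
        rw [← hL', h1]
        exact finrank_le_dimS 𝒜 _
      have hexp : dimS X - Module.finrank ℝ (dirL ℬ) =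
          (dimS (slice X H 0) - Module.finrank ℝ (dirL ℬ)) + 1 := by omega
      rw [hL', hexp, pow_succ]
      simp only [hbd]
      have m1 : Bd ℬ (slice X H 1) → Bd ℬ (slice X H 0) := by
        refine slice_bd ℬ ham ?_
        rw [slice_zero_eq, slice_pos_eq]
        rintro z ⟨hz, hz0⟩
        refine ⟨hX z hz a ha _ (by norm_num) (by norm_num), ?_⟩
        have hz0' : H z = 0 := hz0
        show 0 < H _
        rw [aff_line, hz0']; linarith
      have m2 : Bd ℬ (slice X H (-1)) → Bd ℬ (slice X H 0) := by
        refine slice_bd ℬ hbm ?_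
        rw [slice_zero_eq, slice_neg_eq]
        rintro z ⟨hz, hz0⟩
        refine ⟨hX z hz b hb _ (by norm_num) (by norm_num), ?_⟩
        have hz0' : H z = 0 := hz0
        show H _ < 0
        rw [aff_line, hz0']; linarith
      have m3 : Bd ℬ (slice X H 0) → Bd ℬ (slice X H 1) ∨ Bd ℬ (slice X H (-1)) := by
        rw [slice_zero_eq, slice_pos_eq, slice_neg_eq]
        exact one_side ℬ F'.sgn H hdir hp ha hb hHp hHa hHb
      have m4 : ∀ s, Bd ℬ X → Bd ℬ (slice X H s) := by
        intro s h ℓ hℓ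
        obtain ⟨M, hM⟩ := h ℓ hℓ
        exact ⟨M, fun x hx => hM x hx.1⟩
      have m5 : Bd ℬ (slice X H 1) → Bd ℬ (slice X H (-1)) → Bd ℬ X := by
        intro h1 h2 ℓ hℓ
        obtain ⟨M0, hM0⟩ := m1 h1 ℓ hℓ
        obtain ⟨M1, hM1⟩ := h1 ℓ hℓ
        obtain ⟨M2, hM2⟩ := h2 ℓ hℓ
        refine ⟨max M0 (max M1 M2), fun x hx => ?_⟩
        rcases lt_trichotomy (H x) 0 with h | h | h
        · exact (hM2 x ⟨hx, sign_neg h⟩).trans (by simp)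
        · exact (hM0 x ⟨hx, by simp [h]⟩).trans (by simp)
        · exact (hM1 x ⟨hx, sign_pos h⟩).trans (by simp)
      by_cases c1 : Bd ℬ (slice X H 1) <;> by_cases c2 : Bd ℬ (slice X H (-1))
      · simp [c1, c2, m1 c1, m5 c1 c2]
      · have : ¬ Bd ℬ X := fun h => c2 (m4 _ h)
        simp [c1, c2, m1 c1, this]
      · have : ¬ Bd ℬ X := fun h => c1 (m4 _ h)
        simp [c1, c2, m2 c2, this]
      · have h1 : ¬ Bd ℬ X := fun h => c1 (m4 _ h)
        have h0 : ¬ Bd ℬ (slice X H 0) := fun h => (m3 h).elim c1 c2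
        simp [c1, c2, h0, h1]
    · have n1 : ¬ Bd 𝒜 (slice X H 1) := by
        intro h
        obtain ⟨M, hM⟩ := h H hH
        exact hdir (dir_zero_of_bdd ℬ H (by decide) ham hM)
      have n2 : ¬ Bd 𝒜 (slice X H (-1)) := by
        intro h
        obtain ⟨M, hM⟩ := h H hH
        exact hdir (dir_zero_of_bdd ℬ H (by decide) hbm hM)
      rw [if_neg n1, if_neg n2, add_zero, add_zero]
      push Not at hdir
      obtain ⟨r, hr, hHr⟩ := hdir
      have hd : Module.finrank ℝ (dirL 𝒜) + 1 = Module.finrank ℝ (dirL ℬ) := by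
        rw [hL]; exact finrank_inf_ker _ _ hr hHr
      have hexp : dimS (slice X H 0) - Module.finrank ℝ (dirL 𝒜) =
          dimS X - Module.finrank ℝ (dirL ℬ) := by omega
      have hiff : Bd 𝒜 (slice X H 0) ↔ Bd ℬ X := by
        rw [Bd_iff 𝒜 ℬ H hA]
        constructor
        · rintro ⟨h, _⟩ ℓ hℓ
          obtain ⟨M, hM⟩ := h ℓ hℓ
          refine ⟨M, fun x hx => ?_⟩
          have h1 := hM (x + (- H x / H.linear r) • r) (by
            rw [slice_zero_eq]
            refine ⟨shift_mem ℬ hx hr _, ?_⟩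
            show H _ = 0
            rw [aff_add, map_smul, smul_eq_mul, div_mul_cancel₀ _ hHr]; ring)
          rw [aff_add, map_smul, (mem_dirL ℬ).1 hr ℓ hℓ, smul_zero, add_zero] at h1
          exact h1
        · intro h
          refine ⟨fun ℓ hℓ => ?_, 0, fun x hx => ?_⟩
          · obtain ⟨M, hM⟩ := h ℓ hℓ
            exact ⟨M, fun x hx => hM x hx.1⟩
          · rw [slice_zero_eq] at hx
            have : H x = 0 := hx.2
            simp [this]
      rw [hexp]
      simp only [hiff]

end Deletion

/-- The Tits product of faces. -/
def mulF (F G : Face 𝒜) : Face 𝒜 :=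
  ⟨combineSgn F.sgn G.sgn, by
    obtain ⟨x, hx⟩ := F.nonempty
    obtain ⟨y, hy⟩ := G.nonempty
    obtain ⟨ε, h0, _, h⟩ := exists_small 𝒜 x (y - x)
    refine ⟨x + ε • (y - x), fun ℓ => ?_⟩
    unfold combineSgn
    by_cases hz : ℓ.1 x = 0
    · have hs : F.sgn ℓ = 0 := by rw [← hx ℓ, hz]; simp
      rw [if_pos hs, aff_line, hz, mul_zero, zero_add, sign_mul, sign_pos h0, one_mul]
      exact hy ℓ
    · have hs : F.sgn ℓ ≠ 0 := by rw [← hx ℓ]; simpa [sign_eq_zero_iff] using hz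
      rw [if_neg hs, h ε (abs_of_pos h0).le ℓ.1 ℓ.2 hz]
      exact hx ℓ⟩

open Classical in
lemma wt_central {x : V n} (hx : ∀ ℓ ∈ 𝒜, ℓ x = 0) (F : Face 𝒜) :
    wt 𝒜 (F.carrier 𝒜) = if F = faceOf 𝒜 x then 1 else 0 := by
  split_ifs with hF
  · have hsgn : ∀ ℓ, F.sgn ℓ = 0 := by
      intro ℓ; rw [hF]; show SignType.sign (ℓ.1 x) = 0
      rw [hx ℓ.1 ℓ.2, sign_zero]
    have hb : Bd 𝒜 (F.carrier 𝒜) := by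
      intro ℓ hℓ
      refine ⟨0, fun y hy => ?_⟩
      have h1 := hy ⟨ℓ, hℓ⟩
      rw [hsgn, sign_eq_zero_iff] at h1
      simp [h1]
    have hd : linDir 𝒜 F.sgn = dirL 𝒜 := by
      ext v
      rw [mem_linDir, mem_dirL]
      exact ⟨fun h ℓ hℓ => h ⟨ℓ, hℓ⟩ (hsgn _), fun h ℓ _ => h ℓ.1 ℓ.2⟩
    rw [wt, if_pos hb, dimS_carrier, hd, Nat.sub_self, pow_zero]
  · rw [wt, if_neg]
    intro hb
    apply hF
    apply Face.ext
    funext ℓ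
    show F.sgn ℓ = SignType.sign (ℓ.1 x)
    rw [hx ℓ.1 ℓ.2, sign_zero]
    by_contra hne
    obtain ⟨y, hy⟩ := F.nonempty
    have hy0 : ℓ.1 y ≠ 0 := by
      intro h0; apply hne; rw [← hy ℓ, h0, sign_zero]
    obtain ⟨M, hM⟩ := hb ℓ.1 ℓ.2
    have hpos : 0 < |ℓ.1 y| := abs_pos.2 hy0
    have hk : 0 < 1 + |M| / |ℓ.1 y| := by positivity
    have h1 := hM (x + (1 + |M| / |ℓ.1 y|) • (y - x)) (by
      intro ℓ'
      rw [aff_line, hx ℓ'.1 ℓ'.2, mul_zero, zero_add, sign_mul, sign_pos hk, one_mul]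
      exact hy ℓ')
    rw [aff_line, hx ℓ.1 ℓ.2, mul_zero, zero_add, abs_mul, abs_of_pos hk] at h1
    have h2 : (1 + |M| / |ℓ.1 y|) * |ℓ.1 y| = |ℓ.1 y| + |M| := by field_simp
    have := le_abs_self M
    linarith

open Classical in
/-- An element killed by all deletions vanishes unless the arrangement is central. -/
lemma central_of_killed (z : Face 𝒜 → ℝ)
    (hz : ∀ H ∈ 𝒜, ∀ C' : Face (𝒜.erase H),
      (∑ C : Face 𝒜, if res (Finset.erase_subset H 𝒜) C = C' then z C else 0) = 0)
    {C : Face 𝒜} (hC : z C ≠ 0) : ∃ x : V n, ∀ ℓ ∈ 𝒜, ℓ x = 0 := by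
  have nb : ∀ C : Face 𝒜, z C ≠ 0 → ∀ H : Idx 𝒜, ∃ D : Face 𝒜, z D ≠ 0 ∧ D.sgn H ≠ C.sgn H ∧
      ∀ ℓ, ℓ ≠ H → D.sgn ℓ = C.sgn ℓ := by
    intro C hC H
    by_contra hno
    push Not at hno
    have h1 := hz H.1 H.2 (res (Finset.erase_subset H.1 𝒜) C)
    rw [Finset.sum_eq_single C] at h1
    · simp at h1; exact hC h1
    · intro D _ hDC
      split_ifs with hr
      · by_contra hD
        have hagree : ∀ ℓ, ℓ ≠ H → D.sgn ℓ = C.sgn ℓ := by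
          intro ℓ hℓ
          have hm : ℓ.1 ∈ 𝒜.erase H.1 :=
            Finset.mem_erase.2 ⟨fun h => hℓ (Subtype.ext h), ℓ.2⟩
          exact congrFun (congrArg Face.sgn hr) ⟨ℓ.1, hm⟩
        by_cases hs : D.sgn H = C.sgn H
        · apply hDC
          apply Face.ext
          funext ℓ
          by_cases hℓ : ℓ = H
          · rw [hℓ]; exact hs
          · exact hagree ℓ hℓ
        · obtain ⟨ℓ, h2, h3⟩ := hno D hD hs
          exact h3 (hagree ℓ h2)
      · rfl
    · simp
  have claim : ∀ S : Finset (Idx 𝒜), ∀ C : Face 𝒜, z C ≠ 0 →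
      ∃ x : V n, (∀ ℓ ∈ S, ℓ.1 x = 0) ∧ ∀ ℓ, ℓ ∉ S → SignType.sign (ℓ.1 x) = C.sgn ℓ := by
    intro S
    induction S using Finset.induction_on with
    | empty =>
      intro C _
      obtain ⟨x, hx⟩ := C.nonempty
      exact ⟨x, by simp, fun ℓ _ => hx ℓ⟩
    | insert H S hHS ih =>
      have crossing : ∀ C D : Face 𝒜, (∀ ℓ, ℓ ≠ H → D.sgn ℓ = C.sgn ℓ) → ∀ x y : V n,
          (∀ ℓ ∈ S, ℓ.1 x = 0) → (∀ ℓ, ℓ ∉ S → SignType.sign (ℓ.1 x) = C.sgn ℓ) →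
          (∀ ℓ ∈ S, ℓ.1 y = 0) → (∀ ℓ, ℓ ∉ S → SignType.sign (ℓ.1 y) = D.sgn ℓ) →
          0 < H.1 x → H.1 y < 0 →
          ∃ w : V n, (∀ ℓ ∈ insert H S, ℓ.1 w = 0) ∧
            ∀ ℓ, ℓ ∉ insert H S → SignType.sign (ℓ.1 w) = C.sgn ℓ := by
        intro C D hCD x y hx1 hx2 hy1 hy2 hHx hHy
        have hd : 0 < H.1 x - H.1 y := by linarith
        have ht : 0 ≤ - H.1 y / (H.1 x - H.1 y) := div_nonneg (by linarith) hd.le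
        have ht1 : - H.1 y / (H.1 x - H.1 y) ≤ 1 := by rw [div_le_one hd]; linarith
        refine ⟨y + (- H.1 y / (H.1 x - H.1 y)) • (x - y), ?_, ?_⟩
        · intro ℓ hℓ
          rcases Finset.mem_insert.1 hℓ with rfl | h
          · rw [aff_line]; field_simp; ring
          · rw [aff_line, hx1 ℓ h, hy1 ℓ h]; ring
        · intro ℓ hℓ
          rw [Finset.mem_insert, not_or] at hℓ
          rw [aff_line]
          exact sign_comb ((hy2 ℓ hℓ.2).trans (hCD ℓ hℓ.1)) (hx2 ℓ hℓ.2) ht ht1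
      intro C hC
      obtain ⟨D, hD, hne, hagree⟩ := nb C hC H
      obtain ⟨x, hx1, hx2⟩ := ih C hC
      obtain ⟨y, hy1, hy2⟩ := ih D hD
      have hxH := hx2 H hHS
      have hyH := hy2 H hHS
      rcases lt_trichotomy (H.1 x) 0 with h1 | h1 | h1
      · rcases lt_trichotomy (H.1 y) 0 with h2 | h2 | h2
        · exact absurd (by rw [← hxH, ← hyH, sign_neg h1, sign_neg h2]) hne
        · refine ⟨y, ?_, ?_⟩
          · intro ℓ hℓ
            rcases Finset.mem_insert.1 hℓ with rfl | h
            · exact h2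
            · exact hy1 ℓ h
          · intro ℓ hℓ
            rw [Finset.mem_insert, not_or] at hℓ
            exact (hy2 ℓ hℓ.2).trans (hagree ℓ hℓ.1)
        · obtain ⟨w, hw1, hw2⟩ := crossing D C (fun ℓ h => (hagree ℓ h).symm) y x hy1 hy2 hx1 hx2 h2 h1
          refine ⟨w, hw1, fun ℓ hℓ => (hw2 ℓ hℓ).trans (hagree ℓ ?_)⟩
          rintro rfl
          exact hℓ (Finset.mem_insert_self _ _)
      · refine ⟨x, ?_, ?_⟩
        · intro ℓ hℓ
          rcases Finset.mem_insert.1 hℓ with rfl | h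
          · exact h1
          · exact hx1 ℓ h
        · intro ℓ hℓ
          rw [Finset.mem_insert, not_or] at hℓ
          exact hx2 ℓ hℓ.2
      · rcases lt_trichotomy (H.1 y) 0 with h2 | h2 | h2
        · exact crossing C D hagree x y hx1 hx2 hy1 hy2 h1 h2
        · refine ⟨y, ?_, ?_⟩
          · intro ℓ hℓ
            rcases Finset.mem_insert.1 hℓ with rfl | h
            · exact h2
            · exact hy1 ℓ h
          · intro ℓ hℓ
            rw [Finset.mem_insert, not_or] at hℓ
            exact (hy2 ℓ hℓ.2).trans (hagree ℓ hℓ.1)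
        · exact absurd (by rw [← hxH, ← hyH, sign_pos h1, sign_pos h2]) hne
  obtain ⟨x, hx, _⟩ := claim Finset.univ C hC
  exact ⟨x, fun ℓ hℓ => hx ⟨ℓ, hℓ⟩ (Finset.mem_univ _)⟩

open Classical in
/-- Coefficient of the image of `υ` under a map of faces. -/
def pushC (op : Face 𝒜 → Face 𝒜) (C : Face 𝒜) : ℝ :=
  ∑ F : Face 𝒜, if op F = C then wt 𝒜 (F.carrier 𝒜) else 0

open Classical in
lemma pushC_res (ℬ : Finset (AffForm n)) (H : AffForm n)
    (hB : ℬ ⊆ 𝒜) (hH : H ∈ 𝒜) (hA : ∀ ℓ, ℓ ∈ 𝒜 ↔ ℓ = H ∨ ℓ ∈ ℬ)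
    (hlin : H.linear ≠ 0) (op : Face 𝒜 → Face 𝒜) (op' : Face ℬ → Face ℬ)
    (hop : ∀ F, res hB (op F) = op' (res hB F)) (C' : Face ℬ) :
    (∑ C : Face 𝒜, if res hB C = C' then pushC 𝒜 op C else 0) = pushC ℬ op' C' := by
  have h1 : ∀ C : Face 𝒜, (if res hB C = C' then pushC 𝒜 op C else 0) =
      ∑ F : Face 𝒜, if op F = C then (if res hB C = C' then wt 𝒜 (F.carrier 𝒜) else 0) else 0 := by
    intro C
    unfold pushC
    by_cases h : res hB C = C' <;> simp [h]
  rw [Finset.sum_congr rfl fun C _ => h1 C, Finset.sum_comm]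
  have h2 : ∀ F : Face 𝒜,
      (∑ C : Face 𝒜, if op F = C then (if res hB C = C' then wt 𝒜 (F.carrier 𝒜) else 0) else 0) =
      ∑ F' : Face ℬ, if res hB F = F' then (if op' F' = C' then wt 𝒜 (F.carrier 𝒜) else 0) else 0 := by
    intro F
    rw [Finset.sum_ite_eq, Finset.sum_ite_eq]
    simp [hop]
  rw [Finset.sum_congr rfl fun F _ => h2 F, Finset.sum_comm]
  unfold pushC
  refine Finset.sum_congr rfl fun F' _ => ?_
  rw [← key 𝒜 ℬ H hB hH hA hlin F']
  by_cases h : op' F' = C' <;> simp [h]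

open Classical in
lemma step (hlin : ∀ ℓ ∈ 𝒜, ℓ.linear ≠ 0) (G : Face 𝒜) (op : Face 𝒜 → Face 𝒜)
    (op' : ∀ H, Face (𝒜.erase H) → Face (𝒜.erase H))
    (hop : ∀ H F, res (Finset.erase_subset H 𝒜) (op F) = op' H (res (Finset.erase_subset H 𝒜) F))
    (hO : ∀ O : Face 𝒜, (∀ ℓ, O.sgn ℓ = 0) → op O = G)
    (ih : ∀ H ∈ 𝒜, ∀ C', pushC (𝒜.erase H) (op' H) C' =
      if C' = res (Finset.erase_subset H 𝒜) G then 1 else 0) (C : Face 𝒜) :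
    pushC 𝒜 op C = if C = G then 1 else 0 := by
  by_contra hne
  have hz : (fun C => pushC 𝒜 op C - if C = G then 1 else 0) C ≠ 0 := sub_ne_zero.2 hne
  obtain ⟨x, hx⟩ := central_of_killed 𝒜 (fun C => pushC 𝒜 op C - if C = G then 1 else 0) (by
    intro H hH C'
    have h1 := pushC_res 𝒜 (𝒜.erase H) H (Finset.erase_subset H 𝒜) hH (by
      intro ℓ
      rw [Finset.mem_erase]
      constructor
      · intro h
        by_cases h' : ℓ = H
        · exact Or.inl h'
        · exact Or.inr ⟨h', h⟩
      · rintro (rfl | h)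
        · exact hH
        · exact h.2) (hlin H hH) op (op' H) (hop H) C'
    rw [ih H hH C'] at h1
    have h2 : ∀ C : Face 𝒜, (if res (Finset.erase_subset H 𝒜) C = C' then
        (pushC 𝒜 op C - if C = G then (1 : ℝ) else 0) else 0) =
        (if res (Finset.erase_subset H 𝒜) C = C' then pushC 𝒜 op C else 0) -
        (if C = G then (if res (Finset.erase_subset H 𝒜) C = C' then (1 : ℝ) else 0) else 0) := by
      intro C
      split_ifs <;> simp
    rw [Finset.sum_congr rfl fun C _ => h2 C, Finset.sum_sub_distrib, h1, Finset.sum_ite_eq']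
    simp [eq_comm]) hz
  apply hne
  unfold pushC
  simp only [wt_central 𝒜 hx]
  have hop0 : op (faceOf 𝒜 x) = G := hO _ fun ℓ => by
    show SignType.sign (ℓ.1 x) = 0
    rw [hx ℓ.1 ℓ.2, sign_zero]
  rw [Finset.sum_eq_single (faceOf 𝒜 x)]
  · rw [hop0]; simp [eq_comm]
  · intro F _ hF; simp [hF]
  · simp

open Classical in
lemma both : ∀ (k : ℕ) (𝒜 : Finset (AffForm n)), 𝒜.card = k → (∀ ℓ ∈ 𝒜, ℓ.linear ≠ 0) →
    ∀ G C : Face 𝒜, pushC 𝒜 (fun F => mulF 𝒜 F G) C = (if C = G then 1 else 0) ∧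
      pushC 𝒜 (fun F => mulF 𝒜 G F) C = (if C = G then 1 else 0) := by
  intro k
  induction k with
  | zero =>
    intro 𝒜 h0 hlin G C
    have he : ∀ ℓ, ℓ ∉ 𝒜 := by rw [Finset.card_eq_zero.1 h0]; simp
    have hsub : ∀ F F' : Face 𝒜, F = F' := fun F F' =>
      Face.ext (funext fun ℓ => absurd ℓ.2 (he ℓ.1))
    exact ⟨step 𝒜 hlin G _ (fun H F => F) (fun H F => congrArg _ (hsub _ _)) (fun _ _ => hsub _ _)
      (fun H hH => absurd hH (he H)) C,
      step 𝒜 hlin G _ (fun H F => F) (fun H F => congrArg _ (hsub _ _)) (fun _ _ => hsub _ _)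
      (fun H hH => absurd hH (he H)) C⟩
  | succ k ih =>
    intro 𝒜 hk hlin G C
    have ih' : ∀ H ∈ 𝒜, ∀ G C, _ := fun H hH => ih (𝒜.erase H)
      (by rw [Finset.card_erase_of_mem hH, hk]; rfl)
      (fun ℓ hℓ => hlin ℓ (Finset.mem_of_mem_erase hℓ))
    constructor
    · refine step 𝒜 hlin G _ (fun H F => mulF _ F (res (Finset.erase_subset H 𝒜) G))
        (fun H F => rfl) ?_ (fun H hH C' => (ih' H hH _ C').1) C
      intro O hO
      apply Face.ext; funext ℓ
      simp [mulF, combineSgn, hO]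
    · refine step 𝒜 hlin G _ (fun H F => mulF _ (res (Finset.erase_subset H 𝒜) G) F)
        (fun H F => rfl) ?_ (fun H hH C' => (ih' H hH _ C').2) C
      intro O hO
      apply Face.ext; funext ℓ
      simp only [mulF, combineSgn, hO]
      split_ifs with h
      · exact h.symm
      · rfl

open Classical in
/-- **Theorem (the Tits algebra of an affine arrangement is unital).**
The element `υ = Σ_F (-1)^{rk F} H_F`, with `F` running over the essentially bounded
faces, satisfies `υ · H_G = H_G = H_G · υ` for every face `G`.  Here `rk F = dim F - d`
where `d = dim L` and `L = ⋂_{H ∈ 𝒜} dir H`. -/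
theorem unit_of_titsAlgebra {n : ℕ} (𝒜 : Finset (AffForm n))
    (h𝒜 : ∀ ℓ ∈ 𝒜, ℓ.linear ≠ 0)
    (υ : Face 𝒜 → ℝ)
    (hυ : υ = fun F => if EssBounded 𝒜 F then
      (-1 : ℝ) ^ (dimS (Face.carrier 𝒜 F) - Module.finrank ℝ (dirL 𝒜)) else 0) :
    ∀ G : Face 𝒜, mulT 𝒜 υ (unitV 𝒜 G) = unitV 𝒜 G ∧ mulT 𝒜 (unitV 𝒜 G) υ = unitV 𝒜 G := by
  have hυ' : ∀ F, υ F = wt 𝒜 (F.carrier 𝒜) := by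
    intro F
    rw [hυ]
    unfold wt
    simp only [EssBounded, bounded_iff]
  have hmul : ∀ F G C : Face 𝒜, combineSgn F.sgn G.sgn = C.sgn ↔ mulF 𝒜 F G = C := by
    intro F G C
    exact ⟨fun h => Face.ext h, fun h => congrArg Face.sgn h⟩
  intro G
  constructor
  · funext C
    rw [unitV, ← (both _ 𝒜 rfl h𝒜 G C).1]
    unfold mulT pushC
    refine Finset.sum_congr rfl fun F _ => ?_
    rw [Finset.sum_eq_single G]
    · simp [unitV, hmul, hυ']
    · intro G' _ hG'
      simp [unitV, hG']
    · simp
  · funext C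
    rw [unitV, ← (both _ 𝒜 rfl h𝒜 G C).2]
    unfold mulT pushC
    rw [Finset.sum_eq_single G]
    · refine Finset.sum_congr rfl fun F _ => ?_
      simp [unitV, hmul, hυ']
    · intro G' _ hG'
      simp [unitV, hG']
    · simp

end CharElts
end
end
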